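/- arXiv:2406.02516 — 5 statements merged into one kernel-verified Lean document; each statement's English description precedes it below -/
import Mathlib

section
/- Let A be a symmetric linear endomorphism of a 3-dimensional real inner product space with trace zero (i.e. tr A = 0 and ⟪A x, y⟫ = ⟪x, A y⟫ for all x, y). Then for every unit vector v one has ‖A‖² ≥ (3/2)·‖A v‖², where ‖A‖² = ∑ᵢ ‖A eᵢ‖² denotes the squared Frobenius (Hilbert–Schmidt) norm computed in any orthonormal basis (e₁, e₂, e₃). -/
open RealInnerProductSpace

/-!
Diagonalize `A` with eigenvalues `λⱼ`. Then `‖A v‖²` is an average of the `λⱼ²` when `v` is a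
unit vector, whereas `‖A‖² = ∑ⱼ λⱼ²`. Since `∑ⱼ λⱼ = 0`, each `λⱼ` is minus the sum of the `n - 1`
others, so Cauchy–Schwarz gives `λⱼ² ≤ (n - 1) ∑_{k ≠ j} λₖ²`, that is
`n λⱼ² ≤ (n - 1) ∑ₖ λₖ²`.
-/

theorem card_mul_sq_le_of_sum_eq_zero {ι R : Type*} [CommRing R] [LinearOrder R]
    [IsStrictOrderedRing R] {s : Finset ι} {f : ι → R} (hf : ∑ j ∈ s, f j = 0) {i : ι}
    (hi : i ∈ s) : (s.card : R) * f i ^ 2 ≤ (s.card - 1) * ∑ j ∈ s, f j ^ 2 := by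
  classical
  have hfi : f i = -∑ j ∈ s.erase i, f j :=
    eq_neg_of_add_eq_zero_left ((s.add_sum_erase f hi).trans hf)
  have cauchy_schwarz : f i ^ 2 ≤ (s.card - 1) * ∑ j ∈ s.erase i, f j ^ 2 := by
    rw [hfi, neg_sq, ← Finset.cast_card_erase_of_mem hi]
    exact sq_sum_le_card_mul_sum_sq
  calc (s.card : R) * f i ^ 2 = f i ^ 2 + (s.card - 1) * f i ^ 2 := by ring
    _ ≤ (s.card - 1) * ∑ j ∈ s.erase i, f j ^ 2 + (s.card - 1) * f i ^ 2 := by gcongr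
    _ = (s.card - 1) * ∑ j ∈ s, f j ^ 2 := by
      rw [← s.add_sum_erase _ hi]
      ring

section

variable {𝕜 E F ι : Type*} [RCLike 𝕜]
  [NormedAddCommGroup E] [InnerProductSpace 𝕜 E] [FiniteDimensional 𝕜 E]
  [NormedAddCommGroup F] [InnerProductSpace 𝕜 F] [FiniteDimensional 𝕜 F] [Fintype ι]

theorem sum_norm_sq_map_eq_re_trace_adjoint_comp (T : E →ₗ[𝕜] F) (b : OrthonormalBasis ι 𝕜 E) :
    ∑ i, ‖T (b i)‖ ^ 2 = RCLike.re (LinearMap.trace 𝕜 E (T.adjoint ∘ₗ T)) := by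
  simp only [LinearMap.trace_eq_sum_inner _ b, LinearMap.comp_apply,
    LinearMap.adjoint_inner_right, map_sum, inner_self_eq_norm_sq]

variable {A : E →ₗ[𝕜] E} {n : ℕ}

theorem norm_sq_map_eq_sum_eigenvalues_sq_mul (hA : A.IsSymmetric)
    (hn : Module.finrank 𝕜 E = n) (v : E) :
    ‖A v‖ ^ 2 =
      ∑ j, hA.eigenvalues hn j ^ 2 * ‖inner 𝕜 (hA.eigenvectorBasis hn j) v‖ ^ 2 := by
  rw [← (hA.eigenvectorBasis hn).sum_sq_norm_inner_right (A v)]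
  refine Finset.sum_congr rfl fun j _ => ?_
  rw [← hA, hA.apply_eigenvectorBasis, inner_smul_left, norm_mul, RCLike.norm_conj,
    RCLike.norm_ofReal, mul_pow, sq_abs]

theorem sum_norm_sq_map_eq_sum_eigenvalues_sq (hA : A.IsSymmetric)
    (hn : Module.finrank 𝕜 E = n) (b : OrthonormalBasis ι 𝕜 E) :
    ∑ i, ‖A (b i)‖ ^ 2 = ∑ j, hA.eigenvalues hn j ^ 2 := by
  rw [sum_norm_sq_map_eq_re_trace_adjoint_comp A b,
    ← sum_norm_sq_map_eq_re_trace_adjoint_comp A (hA.eigenvectorBasis hn)]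
  refine Finset.sum_congr rfl fun j _ => ?_
  rw [hA.apply_eigenvectorBasis, norm_smul, OrthonormalBasis.norm_eq_one, mul_one,
    RCLike.norm_ofReal, sq_abs]

theorem sum_eigenvalues_eq_zero_of_trace_eq_zero (hA : A.IsSymmetric)
    (hn : Module.finrank 𝕜 E = n) (htr : LinearMap.trace 𝕜 E A = 0) :
    ∑ j, hA.eigenvalues hn j = 0 := by
  rw [← hA.re_trace_eq_sum_eigenvalues hn, htr, map_zero]

theorem stmt_0_general (hA : A.IsSymmetric) (hn : Module.finrank 𝕜 E = n)
    (htr : LinearMap.trace 𝕜 E A = 0) (b : OrthonormalBasis ι 𝕜 E) (v : E) :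
    n * ‖A v‖ ^ 2 ≤ (n - 1 : ℝ) * (∑ i, ‖A (b i)‖ ^ 2) * ‖v‖ ^ 2 := by
  set e := hA.eigenvectorBasis hn
  set μ := hA.eigenvalues hn
  have eigenvalue_bound (j : Fin n) : n * μ j ^ 2 ≤ (n - 1 : ℝ) * ∑ k, μ k ^ 2 := by
    simpa only [Finset.card_univ, Fintype.card_fin] using card_mul_sq_le_of_sum_eq_zero
      (sum_eigenvalues_eq_zero_of_trace_eq_zero hA hn htr) (Finset.mem_univ j)
  calc n * ‖A v‖ ^ 2 = ∑ j, n * μ j ^ 2 * ‖inner 𝕜 (e j) v‖ ^ 2 := by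
        simp only [norm_sq_map_eq_sum_eigenvalues_sq_mul hA hn v, Finset.mul_sum, mul_assoc, e, μ]
    _ ≤ ∑ j, ((n - 1) * ∑ k, μ k ^ 2) * ‖inner 𝕜 (e j) v‖ ^ 2 :=
        Finset.sum_le_sum fun j _ => mul_le_mul_of_nonneg_right (eigenvalue_bound j) (sq_nonneg _)
    _ = (n - 1) * (∑ i, ‖A (b i)‖ ^ 2) * ‖v‖ ^ 2 := by
        rw [← Finset.mul_sum, e.sum_sq_norm_inner_right,
          sum_norm_sq_map_eq_sum_eigenvalues_sq hA hn b]

end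

/-- A symmetric trace-free endomorphism `A` of a 3-dimensional real inner product
space satisfies the refined Kato-type inequality `‖A‖² ≥ (3/2)‖A v‖²` for every unit
vector `v`, where `‖A‖²` is the squared Frobenius norm computed in any orthonormal
basis. -/
theorem stmt_0 (V : Type*) [NormedAddCommGroup V] [InnerProductSpace ℝ V]
    [FiniteDimensional ℝ V] (hdim : Module.finrank ℝ V = 3)
    (A : V →ₗ[ℝ] V)
    (hsymm : ∀ x y : V, ⟪A x, y⟫ = ⟪x, A y⟫)
    (htr : LinearMap.trace ℝ V A = 0)
    (b : OrthonormalBasis (Fin 3) ℝ V)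
    (v : V) (hv : ‖v‖ = 1) :
    (3/2) * ‖A v‖ ^ 2 ≤ ∑ i : Fin 3, ‖A (b i)‖ ^ 2 := by
  have kato := stmt_0_general hsymm hdim htr b v
  simp only [hv, one_pow, mul_one, Nat.cast_ofNat] at kato
  linarith
end

section
/- Let a be a real number with 1 ≤ a ≤ 3/2 and define u : ℝ → ℝ by u(t) = (cosh(a t))^{-1/a}. Then for every t ∈ ℝ, u''(t) + 2·tanh(a t)·u'(t) = (a − 1)·sinh(a t)²·(cosh(a t))^{-(2 + 1/a)} − a·(cosh(a t))^{-1/a}, and this quantity is ≤ −u(t). -/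
/-!
For every exponent `p` and every fibre dimension `k`, the radial Laplacian of `cosh(at)^p` is an
explicit combination of `cosh(at)^p` and `sinh²(at) cosh(at)^(p-2)`. Replacing `sinh²` by
`cosh² - 1` makes it `ap(ap + k) cosh(at)^p` minus a multiple of `cosh(at)^(p-2)`, so `cosh(at)^p`
is a supersolution as soon as that multiple is nonnegative. The eigenvalue bound `-ap(ap + k)` is
largest, equal to `k²/4`, at `ap = -k/2`; for `k = 2` this is the choice `p = -1/a`, which gives
the bound `1`, and the multiple is then `a - 1`.
-/

open Real

/-- The Laplacian `u'' + k h' u'` of a function `u` of `t` alone on the warped product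
`ℝ × 𝕋ᵏ` with metric `dt² + cosh(at)^(2/a) ds²`, where `h' = tanh(at)` is the logarithmic
derivative of the warping factor. The fibre dimension `k` is allowed to be any real number. -/
noncomputable def radialLaplacian (a k : ℝ) (u : ℝ → ℝ) (t : ℝ) : ℝ :=
  deriv (deriv u) t + k * tanh (a * t) * deriv u t

section CoshRpow

variable (a k p t : ℝ)

theorem hasDerivAt_cosh_mul_rpow :
    HasDerivAt (fun x ↦ cosh (a * x) ^ p) (a * p * (sinh (a * t) * cosh (a * t) ^ (p - 1))) t := by
  convert (hasDerivAt_const_mul a).cosh.rpow_const (p := p) (.inl (cosh_pos (a * t)).ne') using 1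
  ring

theorem deriv_cosh_mul_rpow :
    deriv (fun x ↦ cosh (a * x) ^ p) =
      fun x ↦ a * p * (sinh (a * x) * cosh (a * x) ^ (p - 1)) :=
  funext fun x ↦ (hasDerivAt_cosh_mul_rpow a p x).deriv

theorem deriv_deriv_cosh_mul_rpow :
    deriv (deriv fun x ↦ cosh (a * x) ^ p) t =
      a ^ 2 * p *
        (cosh (a * t) ^ p + (p - 1) * sinh (a * t) ^ 2 * cosh (a * t) ^ (p - 2)) := by
  have hderiv := ((hasDerivAt_const_mul a (x := t)).sinh.fun_mul
    (hasDerivAt_cosh_mul_rpow a (p - 1) t)).const_mul (a * p)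
  have hp : cosh (a * t) ^ p = cosh (a * t) ^ (p - 1) * cosh (a * t) := by
    rw [← rpow_add_one (cosh_pos _).ne', sub_add_cancel]
  rw [deriv_cosh_mul_rpow, hderiv.deriv, hp, show p - 1 - 1 = p - 2 by ring]
  ring

theorem radialLaplacian_cosh_mul_rpow :
    radialLaplacian a k (fun x ↦ cosh (a * x) ^ p) t =
      a * p * (a * cosh (a * t) ^ p +
        (a * (p - 1) + k) * sinh (a * t) ^ 2 * cosh (a * t) ^ (p - 2)) := by
  have htanh : tanh (a * t) * cosh (a * t) ^ (p - 1) =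
      sinh (a * t) * cosh (a * t) ^ (p - 2) := by
    rw [tanh_eq_sinh_div_cosh, div_mul_eq_mul_div, mul_div_assoc,
      ← rpow_sub_one (cosh_pos _).ne', show p - 1 - 1 = p - 2 by ring]
  rw [radialLaplacian, deriv_deriv_cosh_mul_rpow, deriv_cosh_mul_rpow]
  linear_combination k * a * p * sinh (a * t) * htanh

theorem radialLaplacian_cosh_mul_rpow_eq_sub :
    radialLaplacian a k (fun x ↦ cosh (a * x) ^ p) t =
      a * p * (a * p + k) * cosh (a * t) ^ p -
        a * p * (a * (p - 1) + k) * cosh (a * t) ^ (p - 2) := by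
  have hp : cosh (a * t) ^ p = cosh (a * t) ^ (p - 2) * cosh (a * t) ^ 2 := by
    rw [← rpow_add_natCast (cosh_pos _).ne', Nat.cast_ofNat, sub_add_cancel]
  rw [radialLaplacian_cosh_mul_rpow, sinh_sq, hp]
  ring

variable {a k p} in
theorem radialLaplacian_cosh_mul_rpow_le (h : 0 ≤ a * p * (a * (p - 1) + k)) :
    radialLaplacian a k (fun x ↦ cosh (a * x) ^ p) t ≤
      a * p * (a * p + k) * cosh (a * t) ^ p := by
  rw [radialLaplacian_cosh_mul_rpow_eq_sub]
  exact sub_le_self _ (mul_nonneg h (rpow_nonneg (cosh_pos _).le _))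

end CoshRpow

theorem stmt_2_general (a : ℝ) (ha : 1 ≤ a)
    (u : ℝ → ℝ) (hu : ∀ t : ℝ, u t = cosh (a * t) ^ (-(1 / a))) (t : ℝ) :
    radialLaplacian a 2 u t =
        (a - 1) * sinh (a * t) ^ 2 * cosh (a * t) ^ (-(2 + 1 / a)) -
          a * cosh (a * t) ^ (-(1 / a)) ∧
      radialLaplacian a 2 u t ≤ -u t := by
  have hap : a * -(1 / a) = -1 := by
    rw [mul_neg, mul_one_div_cancel (by positivity)]
  obtain rfl : u = fun x ↦ cosh (a * x) ^ (-(1 / a)) := funext hu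
  constructor
  · have hexp : -(2 + 1 / a) = -(1 / a) - 2 := by ring
    rw [radialLaplacian_cosh_mul_rpow, mul_sub, hap, hexp]
    ring
  · have hcoeff : 0 ≤ a * -(1 / a) * (a * (-(1 / a) - 1) + 2) := by
      rw [mul_sub, hap]
      linarith
    calc radialLaplacian a 2 (fun x ↦ cosh (a * x) ^ (-(1 / a))) t
        ≤ a * -(1 / a) * (a * -(1 / a) + 2) * cosh (a * t) ^ (-(1 / a)) :=
          radialLaplacian_cosh_mul_rpow_le t hcoeff
      _ = -cosh (a * t) ^ (-(1 / a)) := by rw [hap]; ring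

/-- Example E2 of the paper: for `1 ≤ a ≤ 3/2` and `u(t) = cosh(at)^{-1/a}`, the
Laplacian `u'' + 2 tanh(at) u'` on the warped product `ℝ × 𝕋²` equals
`(a-1) sinh²(at) cosh^{-(2+1/a)}(at) - a cosh^{-1/a}(at)` and is `≤ -u`. -/
theorem stmt_2 (a : ℝ) (ha1 : 1 ≤ a) (ha2 : a ≤ 3/2)
    (u : ℝ → ℝ) (hu : ∀ t : ℝ, u t = Real.cosh (a * t) ^ (-(1/a) : ℝ)) :
    ∀ t : ℝ,
      deriv (deriv u) t + 2 * Real.tanh (a * t) * deriv u t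
          = (a - 1) * Real.sinh (a * t) ^ 2 * Real.cosh (a * t) ^ (-(2 + 1/a) : ℝ)
            - a * Real.cosh (a * t) ^ (-(1/a) : ℝ) ∧
      deriv (deriv u) t + 2 * Real.tanh (a * t) * deriv u t ≤ -u t :=
  stmt_2_general a ha1 u hu
end

section
/- Let w : [1,∞) → ℝ be a continuously differentiable function with w(r) > 0 for all r ≥ 1. Assume that for all 1 ≤ s ≤ t the integral inequality (t^{-1/4}·w'(t) + (1/4)·t^{-5/4}·w(t)) − (s^{-1/4}·w'(s) + (1/4)·s^{-5/4}·w(s)) ≥ −(5/16)·∫_s^t r^{-9/4}·w(r) dr + (3/4)·∫_s^t r^{-1/4}·(w'(r))²/w(r) dr holds. Then the function t ↦ t^{-1/4}·w'(t) − (1/8)·t^{-5/4}·w(t) is nondecreasing on [1,∞); that is, for all 1 ≤ s ≤ t, t^{-1/4}·w'(t) − (1/8)·t^{-5/4}·w(t) ≥ s^{-1/4}·w'(s) − (1/8)·s^{-5/4}·w(s). -/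
/-!
Completing the square, `2 (ε / r) w' ≤ w' ^ 2 / w + (ε / r) ^ 2 w`. Multiplied by `r ^ p`, this
bounds the derivative of `2 ε r ^ (p - 1) w` by the energy density `r ^ p w' ^ 2 / w` up to a
multiple of `r ^ (p - 2) w`. Integrating, the energy term of the hypothesis pays for the potential
term as soon as `γ ≤ κ (2 ε (1 - p) - ε ^ 2)`, and what is left is a boundary term. In the
paper's notation `p = -α`; for `p = -1/4`, `ε = 1/4`, `κ = 3/4`, `γ = 5/16` the condition reads
`20/64 ≤ 27/64`.
-/

section WeightedEnergy

open Set MeasureTheory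

variable {w w' : ℝ → ℝ} {I : Set ℝ} (p : ℝ)

/-- With `v = w'`, the left side is the derivative of `2 ε r ^ (p - 1) w`. -/
lemma two_mul_deriv_rpow_mul_le {r w v : ℝ} (hr : 0 < r) (hw : 0 < w) (ε : ℝ) :
    2 * ε * ((p - 1) * r ^ (p - 2) * w + r ^ (p - 1) * v)
      ≤ r ^ p * v ^ 2 / w - (2 * ε * (1 - p) - ε ^ 2) * (r ^ (p - 2) * w) := by
  have rpow_sub_one : r ^ (p - 1) = r ^ (p - 2) * r := by
    rw [← Real.rpow_add_one hr.ne']; ring_nf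
  have rpow_eq : r ^ p = r ^ (p - 2) * r ^ 2 := by
    rw [← Real.rpow_add_natCast hr.ne']; norm_num
  have young : 2 * ε * (r * v) ≤ w * ε ^ 2 + w⁻¹ * (r * v) ^ 2 := two_mul_le_add_mul_sq hw
  calc 2 * ε * ((p - 1) * r ^ (p - 2) * w + r ^ (p - 1) * v)
      = r ^ (p - 2) * (2 * ε * (r * v)) - 2 * ε * (1 - p) * (r ^ (p - 2) * w) := by
        rw [rpow_sub_one]; ring
    _ ≤ r ^ (p - 2) * (w * ε ^ 2 + w⁻¹ * (r * v) ^ 2)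
          - 2 * ε * (1 - p) * (r ^ (p - 2) * w) := by gcongr
    _ = r ^ p * v ^ 2 / w - (2 * ε * (1 - p) - ε ^ 2) * (r ^ (p - 2) * w) := by
        rw [rpow_eq]; ring

lemma continuousOn_rpow_mul (hI_pos : I ⊆ Ioi 0) (hw : ContinuousOn w I) :
    ContinuousOn (fun r ↦ r ^ p * w r) I :=
  (continuousOn_id.rpow_const fun _ hr ↦ .inl (hI_pos hr).ne').mul hw

lemma two_mul_sub_le_integral_rpow_mul_sq_div_sub {a b : ℝ} (ha : 0 < a) (hab : a ≤ b)
    (hderiv : ∀ r ∈ Icc a b, HasDerivWithinAt w (w' r) (Icc a b) r)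
    (hpos : ∀ r ∈ Icc a b, 0 < w r)
    (henergy : IntervalIntegrable (fun r ↦ r ^ p * w' r ^ 2 / w r) volume a b) (ε : ℝ) :
    2 * ε * (b ^ (p - 1) * w b - a ^ (p - 1) * w a)
      ≤ (∫ r in a..b, r ^ p * w' r ^ 2 / w r)
        - (2 * ε * (1 - p) - ε ^ 2) * ∫ r in a..b, r ^ (p - 2) * w r := by
  have hIcc : Icc a b ⊆ Ioi 0 := fun r hr ↦ ha.trans_le hr.1
  have hw : ContinuousOn w (Icc a b) := HasDerivWithinAt.continuousOn hderiv
  have hpotential := ((continuousOn_rpow_mul (p - 2) hIcc hw).intervalIntegrable_of_Icc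
    (μ := volume) hab).const_mul (2 * ε * (1 - p) - ε ^ 2)
  have hderiv_mul : ∀ r ∈ Ioo a b, HasDerivAt (fun x ↦ 2 * ε * (x ^ (p - 1) * w x))
      (2 * ε * ((p - 1) * r ^ (p - 2) * w r + r ^ (p - 1) * w' r)) r := fun r hr ↦ by
    have hrpow := Real.hasDerivAt_rpow_const (p := p - 1) (.inl (ha.trans hr.1).ne')
    rw [sub_sub, one_add_one_eq_two] at hrpow
    exact (hrpow.mul ((hderiv r (Ioo_subset_Icc_self hr)).hasDerivAt
      (Icc_mem_nhds hr.1 hr.2))).const_mul _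
  have hftc := intervalIntegral.sub_le_integral_of_hasDeriv_right_of_le
    (g := fun r ↦ 2 * ε * (r ^ (p - 1) * w r)) hab
    (continuousOn_const.mul (continuousOn_rpow_mul (p - 1) hIcc hw))
    (fun r hr ↦ (hderiv_mul r hr).hasDerivWithinAt)
    ((intervalIntegrable_iff_integrableOn_Icc_of_le hab).1 (henergy.sub hpotential))
    (fun r hr ↦ two_mul_deriv_rpow_mul_le p (ha.trans hr.1) (hpos r (Ioo_subset_Icc_self hr)) ε)
  rwa [intervalIntegral.integral_sub henergy hpotential, intervalIntegral.integral_const_mul,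
    ← mul_sub] at hftc

lemma intervalIntegrable_rpow_mul_sq_div {s t : ℝ} (hI : I.OrdConnected)
    (hI_pos : I ⊆ Ioi 0) (hw : ContinuousOn w I) (hw' : ContinuousOn w' I)
    (hne : ∀ r ∈ I, w r ≠ 0) (hs : s ∈ I) (ht : t ∈ I) :
    IntervalIntegrable (fun r ↦ r ^ p * w' r ^ 2 / w r) volume s t :=
  (((continuousOn_rpow_mul p hI_pos (hw'.pow 2)).div hw hne).mono
    (hI.uIcc_subset hs ht)).intervalIntegrable

theorem stmt_4_general (hI : I.OrdConnected) (hI_pos : I ⊆ Ioi 0)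
    {β γ κ ε : ℝ} (hκ : 0 ≤ κ) (hγ : γ ≤ κ * (2 * ε * (1 - p) - ε ^ 2))
    (hderiv : ∀ r ∈ I, HasDerivWithinAt w (w' r) I r) (hpos : ∀ r ∈ I, 0 < w r)
    (henergy : ∀ s ∈ I, ∀ t ∈ I,
      IntervalIntegrable (fun r ↦ r ^ p * w' r ^ 2 / w r) volume s t)
    (hineq : ∀ s ∈ I, ∀ t ∈ I, s ≤ t →
      -γ * (∫ r in s..t, r ^ (p - 2) * w r) + κ * (∫ r in s..t, r ^ p * w' r ^ 2 / w r)
        ≤ (t ^ p * w' t + β * t ^ (p - 1) * w t) - (s ^ p * w' s + β * s ^ (p - 1) * w s)) :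
    MonotoneOn (fun t ↦ t ^ p * w' t + (β - 2 * κ * ε) * t ^ (p - 1) * w t) I := by
  intro s hs t ht hst
  have hsub : Icc s t ⊆ I := hI.out hs ht
  have hmass : 0 ≤ ∫ r in s..t, r ^ (p - 2) * w r :=
    intervalIntegral.integral_nonneg hst fun r hr ↦
      mul_nonneg (Real.rpow_nonneg (hI_pos (hsub hr)).le _) (hpos r (hsub hr)).le
  have hpotential : γ * (∫ r in s..t, r ^ (p - 2) * w r)
      ≤ κ * (2 * ε * (1 - p) - ε ^ 2) * ∫ r in s..t, r ^ (p - 2) * w r := by gcongr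
  have hboundary : κ * (2 * ε * (t ^ (p - 1) * w t - s ^ (p - 1) * w s))
      ≤ κ * ((∫ r in s..t, r ^ p * w' r ^ 2 / w r)
        - (2 * ε * (1 - p) - ε ^ 2) * ∫ r in s..t, r ^ (p - 2) * w r) := by
    gcongr
    exact two_mul_sub_le_integral_rpow_mul_sq_div_sub p (hI_pos hs) hst
      (fun r hr ↦ (hderiv r (hsub hr)).mono hsub) (fun r hr ↦ hpos r (hsub hr))
      (henergy s hs t ht) ε
  linear_combination hineq s hs t ht hst + hboundary + hpotential

end WeightedEnergy

/-- Inequality (b3) of the paper with `α = ε = 1/4` implies the monotonicity (b5):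
for a positive `C¹` function `w` on `[1,∞)` satisfying the integral inequality, the
quantity `t^{-1/4} w'(t) - (1/8) t^{-5/4} w(t)` is nondecreasing. -/
theorem stmt_4 (w w' : ℝ → ℝ)
    (hderiv : ∀ r ∈ Set.Ici (1:ℝ), HasDerivWithinAt w (w' r) (Set.Ici 1) r)
    (hcont : ContinuousOn w' (Set.Ici (1:ℝ)))
    (hpos : ∀ r ∈ Set.Ici (1:ℝ), 0 < w r)
    (hineq : ∀ s t : ℝ, 1 ≤ s → s ≤ t →
      (t ^ (-(1/4) : ℝ) * w' t + (1/4) * t ^ (-(5/4) : ℝ) * w t)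
          - (s ^ (-(1/4) : ℝ) * w' s + (1/4) * s ^ (-(5/4) : ℝ) * w s)
        ≥ -(5/16) * (∫ r in s..t, r ^ (-(9/4) : ℝ) * w r)
          + (3/4) * ∫ r in s..t, r ^ (-(1/4) : ℝ) * (w' r) ^ 2 / w r) :
    ∀ s t : ℝ, 1 ≤ s → s ≤ t →
      s ^ (-(1/4) : ℝ) * w' s - (1/8) * s ^ (-(5/4) : ℝ) * w s
        ≤ t ^ (-(1/4) : ℝ) * w' t - (1/8) * t ^ (-(5/4) : ℝ) * w t := by
  intro s t hs hst
  have exponent_sub_one : (-(1 / 4) : ℝ) - 1 = -(5 / 4) := by norm_num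
  have exponent_sub_two : (-(1 / 4) : ℝ) - 2 = -(9 / 4) := by norm_num
  have hpos_Ici : Set.Ici (1 : ℝ) ⊆ Set.Ioi 0 := Set.Ici_subset_Ioi.2 one_pos
  have hmono := stmt_4_general (-(1 / 4)) (β := 1 / 4) (γ := 5 / 16) (κ := 3 / 4)
    (ε := 1 / 4) Set.ordConnected_Ici hpos_Ici (by norm_num) (by norm_num) hderiv hpos
    (fun a ha b hb ↦ intervalIntegrable_rpow_mul_sq_div _ Set.ordConnected_Ici hpos_Ici
      (HasDerivWithinAt.continuousOn hderiv) hcont (fun r hr ↦ (hpos r hr).ne') ha hb)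
    (fun a ha b _ hab ↦ by
      rw [exponent_sub_one, exponent_sub_two]; exact hineq a b ha hab)
    hs (hs.trans hst) hst
  simp only [exponent_sub_one] at hmono
  linear_combination hmono
end

section
/- Let w : (0,1) → ℝ be a continuously differentiable function with w(t) ≥ 0 for all t ∈ (0,1). Assume: (i) the function t ↦ t·w'(t) − w(t) is nondecreasing on (0,1); (ii) there exists a sequence sₙ ∈ (0,1) with sₙ → 0 and liminf_{n→∞} w'(sₙ) ≥ 0; (iii) there is a constant C > 0 with w(t) ≤ C·(1 − t) for all t ∈ (0,1). Then w(t) = 0 for all t ∈ (0,1). -/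
/-!
Adding a constant `k` to `w` and dividing by `t` gives a function whose derivative is
`(t w'(t) - w(t) - k) / t²`. With `k = a w'(a) - w(a)` hypothesis (i) makes this nonnegative for
`t ≥ a`, which says exactly that `w` lies above its tangent line at `a` to the right of `a`.
Together with (i) this makes `w'` nondecreasing, so (ii) forces `w' ≥ 0` and `w` is nondecreasing.
By (iii) it tends to `0` at `1`, hence `w ≤ 0`.
-/

open Filter Set Topology

section MulDerivSub

variable {D : Set ℝ} {w w' : ℝ → ℝ} {a b : ℝ}

theorem add_mul_sub_le_of_monotoneOn_mul_deriv_sub (hD : D.OrdConnected) (hpos : D ⊆ Ioi 0)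
    (hw : ∀ t ∈ D, HasDerivWithinAt w (w' t) D t)
    (hmono : MonotoneOn (fun t ↦ t * w' t - w t) D) (ha : a ∈ D) (hb : b ∈ D) (hab : a ≤ b) :
    w a + w' a * (b - a) ≤ w b := by
  have ha₀ : 0 < a := hpos ha
  have hb₀ : 0 < b := hpos hb
  have hsub : Icc a b ⊆ D := hD.out ha hb
  set k := a * w' a - w a with hk
  have hquot : ∀ t ∈ Icc a b,
      HasDerivWithinAt (fun t ↦ (w t + k) / t) ((t * w' t - w t - k) / t ^ 2) (Icc a b) t :=
    fun t ht ↦ ((((hw t (hsub ht)).mono hsub).add_const k).div (hasDerivWithinAt_id t _)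
      (hpos (hsub ht)).ne').congr_deriv (by simp only [id_eq]; ring)
  have hquot_mono : MonotoneOn (fun t ↦ (w t + k) / t) (Icc a b) := by
    refine monotoneOn_of_hasDerivWithinAt_nonneg (convex_Icc a b)
      (fun t ht ↦ (hquot t ht).continuousWithinAt)
      (fun t ht ↦ (hquot t (interior_subset ht)).mono interior_subset) fun t ht ↦ ?_
    have ht' : t ∈ Icc a b := interior_subset ht
    have hle : k ≤ t * w' t - w t := hmono ha (hsub ht') ht'.1
    exact div_nonneg (sub_nonneg.2 hle) (sq_nonneg t)
  have hslope : w' a ≤ (w b + k) / b := by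
    calc w' a = (w a + k) / a := by rw [hk, add_sub_cancel, mul_div_cancel_left₀ _ ha₀.ne']
      _ ≤ (w b + k) / b := hquot_mono (left_mem_Icc.2 hab) (right_mem_Icc.2 hab) hab
  rw [le_div_iff₀ hb₀] at hslope
  linarith

theorem monotoneOn_deriv_of_monotoneOn_mul_deriv_sub (hD : D.OrdConnected) (hpos : D ⊆ Ioi 0)
    (hw : ∀ t ∈ D, HasDerivWithinAt w (w' t) D t)
    (hmono : MonotoneOn (fun t ↦ t * w' t - w t) D) : MonotoneOn w' D := by
  intro a ha b hb hab
  have htangent := add_mul_sub_le_of_monotoneOn_mul_deriv_sub hD hpos hw hmono ha hb hab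
  have hle : a * w' a - w a ≤ b * w' b - w b := hmono ha hb hab
  exact le_of_mul_le_mul_left (by linarith : b * w' a ≤ b * w' b) (hpos hb)

end MulDerivSub

section EndpointBounds

variable {α β : Type*} [LinearOrder α] [TopologicalSpace α] [OrderTopology α]
  {f : α → β} {a b t : α} {c : β}

theorem le_of_monotoneOn_Ioo_of_frequently_nhdsGT [Preorder β] (hf : MonotoneOn f (Ioo a b))
    (hc : ∃ᶠ x in 𝓝[>] a, c ≤ f x) (ht : t ∈ Ioo a b) : c ≤ f t := by
  obtain ⟨x, hcx, hax, hxt⟩ := (hc.and_eventually (Ioo_mem_nhdsGT ht.1)).exists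
  exact hcx.trans (hf ⟨hax, hxt.trans ht.2⟩ ht hxt.le)

theorem le_of_monotoneOn_Ioo_of_tendsto_nhdsLT [DenselyOrdered α] [Preorder β]
    [TopologicalSpace β] [ClosedIciTopology β] (hf : MonotoneOn f (Ioo a b))
    (hc : Tendsto f (𝓝[<] b) (𝓝 c)) (ht : t ∈ Ioo a b) : f t ≤ c := by
  have : (𝓝[<] b).NeBot := nhdsLT_neBot_of_exists_lt ⟨t, ht.2⟩
  refine ge_of_tendsto hc (eventually_of_mem (Ioo_mem_nhdsLT ht.2) fun x hx ↦ ?_)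
  exact hf ht ⟨ht.1.trans hx.1, hx.2⟩ hx.1.le

end EndpointBounds

/-- The analytic core of the final argument of Section 4 of the paper: if a
nonnegative `C¹` function `w` on `(0,1)` is such that `t w'(t) - w(t)` is
nondecreasing, `w'(sₙ)` has nonnegative liminf along some sequence `sₙ → 0`, and
`w(t) ≤ C(1-t)`, then `w ≡ 0`. -/
theorem stmt_7 (w w' : ℝ → ℝ)
    (hderiv : ∀ t ∈ Set.Ioo (0:ℝ) 1, HasDerivAt w (w' t) t)
    (hcont : ContinuousOn w' (Set.Ioo (0:ℝ) 1))
    (hnonneg : ∀ t ∈ Set.Ioo (0:ℝ) 1, 0 ≤ w t)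
    (hmono : MonotoneOn (fun t => t * w' t - w t) (Set.Ioo (0:ℝ) 1))
    (s : ℕ → ℝ) (hs : ∀ n, s n ∈ Set.Ioo (0:ℝ) 1)
    (hs0 : Filter.Tendsto s Filter.atTop (nhds 0))
    (hliminf : ∀ ε > (0:ℝ), ∀ᶠ n in Filter.atTop, -ε ≤ w' (s n))
    (C : ℝ) (hC : 0 < C)
    (hbound : ∀ t ∈ Set.Ioo (0:ℝ) 1, w t ≤ C * (1 - t)) :
    ∀ t ∈ Set.Ioo (0:ℝ) 1, w t = 0 := by
  have hderivWithin : ∀ t ∈ Ioo (0 : ℝ) 1, HasDerivWithinAt w (w' t) (Ioo 0 1) t :=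
    fun t ht ↦ (hderiv t ht).hasDerivWithinAt
  have hw'_mono : MonotoneOn w' (Ioo 0 1) :=
    monotoneOn_deriv_of_monotoneOn_mul_deriv_sub ordConnected_Ioo (fun _ ht ↦ ht.1)
      hderivWithin hmono
  have hs_right : Tendsto s atTop (𝓝[>] 0) :=
    tendsto_nhdsWithin_iff.2 ⟨hs0, Eventually.of_forall fun n ↦ (hs n).1⟩
  have hw'_nonneg : ∀ t ∈ Ioo (0 : ℝ) 1, 0 ≤ w' t := fun t ht ↦
    le_of_forall_pos_le_add fun ε hε ↦ neg_le_iff_add_nonneg.1 <|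
      le_of_monotoneOn_Ioo_of_frequently_nhdsGT hw'_mono
        (hs_right.frequently (hliminf ε hε).frequently) ht
  have hw_mono : MonotoneOn w (Ioo 0 1) :=
    monotoneOn_of_hasDerivWithinAt_nonneg (convex_Ioo 0 1)
      (fun t ht ↦ (hderivWithin t ht).continuousWithinAt)
      (by simpa only [interior_Ioo] using hderivWithin)
      (by simpa only [interior_Ioo] using hw'_nonneg)
  have hnear : Ioo (0 : ℝ) 1 ∈ 𝓝[<] 1 := Ioo_mem_nhdsLT one_pos
  have hw_lim : Tendsto w (𝓝[<] 1) (𝓝 0) :=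
    squeeze_zero' (eventually_of_mem hnear hnonneg) (eventually_of_mem hnear hbound)
      ((Continuous.tendsto' (by fun_prop) 1 0 (by simp)).mono_left nhdsWithin_le_nhds)
  exact fun t ht ↦
    (le_of_monotoneOn_Ioo_of_tendsto_nhdsLT hw_mono hw_lim ht).antisymm (hnonneg t ht)
end

section
/- Let w : ℝ → ℝ be a continuously differentiable function with w(t) > 0 for all t ∈ ℝ. Assume: (i) for every twice continuously differentiable function φ : ℝ → ℝ with φ ≥ 0 and all real numbers s < t, one has (φ(t)·w'(t) − φ'(t)·w(t)) − (φ(s)·w'(s) − φ'(s)·w(s)) ≥ −∫_s^t φ''(r)·w(r) dr + (3/4)·∫_s^t φ(r)·(w'(r))²/w(r) dr; (ii) there is a constant C > 0 such that w(t) ≤ C·(1 + |t|) for all t ∈ ℝ. Then w is constant. -/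
/-!
Let `κ = 3/4`. The test function `φ = 1` turns the hypothesis into the weak form of
`w'' ≥ κ w'² / w`, and `(w ^ (1 - κ))'' = (1 - κ) w ^ (-κ) (w'' - κ w'² / w)`, so `w ^ (1 - κ)` is
convex. Since `w` grows at most linearly, `w ^ (1 - κ)` is sublinear, and a sublinear convex
function on the line is constant. As `w` is only `C¹`, the weak inequality is multiplied by the
integrating factor `w ^ (-κ)` through a comparison of one-sided difference quotients.
-/

open Asymptotics Bornology Filter Set Topology

theorem monotone_of_forall_exists_minorant {g : ℝ → ℝ} (hg : Continuous g)
    (hminorant : ∀ x, ∃ m : ℝ → ℝ, ∃ m' : ℝ, HasDerivWithinAt m m' (Ici x) x ∧ 0 ≤ m' ∧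
      m x = g x ∧ ∀ᶠ z in 𝓝[>] x, m z ≤ g z) :
    Monotone g := by
  intro a b hab
  have slope_neg_lt (x r : ℝ) (hr : 0 < r) : ∃ᶠ z in 𝓝[>] x, slope (-g) x z < r := by
    obtain ⟨m, m', hm, hm', hmx, hmg⟩ := hminorant x
    have hslope : ∃ᶠ z in 𝓝[>] x, slope (-m) x z < r :=
      hm.neg.liminf_right_slope_le (by linarith)
    refine (hslope.and_eventually (hmg.and self_mem_nhdsWithin)).mono ?_
    rintro z ⟨hz, hmgz, hxz : x < z⟩
    refine lt_of_le_of_lt ?_ hz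
    simp only [slope_def_field, Pi.neg_apply, hmx]
    gcongr
  have hneg : -g b ≤ -g a :=
    image_le_of_liminf_slope_right_le_deriv_boundary (B := fun _ ↦ -g a)
      hg.neg.continuousOn le_rfl continuousOn_const (fun x _ ↦ hasDerivWithinAt_const x _ (-g a))
      (fun x _ r hr ↦ slope_neg_lt x r hr) (right_mem_Icc.mpr hab)
  exact neg_le_neg_iff.mp hneg

theorem monotone_mul_of_integral_le_sub {p p' q f : ℝ → ℝ} (hp : ∀ x, HasDerivAt p (p' x) x)
    (hp_nonneg : ∀ x, 0 ≤ p x) (hq : Continuous q) (hf : Continuous f)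
    (hqf : ∀ s t, s < t → ∫ r in s..t, q r ≤ f t - f s)
    (hpq : ∀ x, 0 ≤ p' x * f x + p x * q x) :
    Monotone fun x ↦ p x * f x := by
  have hp_cont : Continuous p := continuous_iff_continuousAt.mpr fun x ↦ (hp x).continuousAt
  refine monotone_of_forall_exists_minorant (hp_cont.mul hf) fun x ↦
    ⟨fun z ↦ p z * (f x + ∫ r in x..z, q r), p' x * f x + p x * q x, ?_, hpq x, by simp, ?_⟩
  · simpa using! ((hp x).mul
      ((hq.integral_hasStrictDerivAt x x).hasDerivAt.const_add (f x))).hasDerivWithinAt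
  · filter_upwards [self_mem_nhdsWithin] with z hxz
    exact mul_le_mul_of_nonneg_left (by linarith [hqf x z hxz]) (hp_nonneg z)

theorem convexOn_rpow_of_integral_le_deriv_sub {w : ℝ → ℝ} {κ : ℝ} (hw : ContDiff ℝ 1 w)
    (hpos : ∀ t, 0 < w t) (hκ : κ ≤ 1)
    (hmono : ∀ s t, s < t →
      κ * ∫ r in s..t, deriv w r ^ 2 / w r ≤ deriv w t - deriv w s) :
    ConvexOn ℝ univ fun t ↦ w t ^ (1 - κ) := by
  have hderiv (t : ℝ) : HasDerivAt w (deriv w t) t :=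
    (hw.differentiable one_ne_zero t).hasDerivAt
  have hderiv_rpow (e t : ℝ) :
      HasDerivAt (fun x ↦ w x ^ e) (deriv w t * e * w t ^ (e - 1)) t :=
    (hderiv t).rpow_const (.inl (hpos t).ne')
  have hcont : Continuous (deriv w) := hw.continuous_deriv le_rfl
  have hfactor : Monotone fun t ↦ w t ^ (-κ) * deriv w t := by
    refine monotone_mul_of_integral_le_sub (q := fun t ↦ κ * (deriv w t ^ 2 / w t))
      (hderiv_rpow (-κ)) (fun t ↦ (Real.rpow_pos_of_pos (hpos t) _).le)
      (continuous_const.mul ((hcont.pow 2).div hw.continuous fun t ↦ (hpos t).ne')) hcont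
      (fun s t hst ↦ ?_) (fun t ↦ ?_)
    · simpa only [intervalIntegral.integral_const_mul] using hmono s t hst
    · rw [Real.rpow_sub_one (hpos t).ne']
      exact le_of_eq (by ring)
  refine Monotone.convexOn_univ_of_deriv (fun t ↦ (hderiv_rpow _ t).differentiableAt) ?_
  have hderiv_eq : deriv (fun t ↦ w t ^ (1 - κ)) =
      fun t ↦ (1 - κ) * (w t ^ (-κ) * deriv w t) := by
    funext t
    rw [(hderiv_rpow (1 - κ) t).deriv, sub_sub_cancel_left]
    ring
  rw [hderiv_eq]
  exact hfactor.const_mul (sub_nonneg.mpr hκ)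

theorem antitone_of_convexOn_of_isLittleO_atTop {f : ℝ → ℝ} (hf : ConvexOn ℝ univ f)
    (hlim : f =o[atTop] id) : Antitone f := by
  intro x y hxy
  obtain rfl | hxy := hxy.eq_or_lt
  · exact le_rfl
  have hslope_lim : Tendsto (fun z ↦ (f z - f x) / (z - x)) atTop (𝓝 0) := by
    have hnum : (fun z ↦ f z - f x) =o[atTop] id := hlim.sub (isLittleO_const_id_atTop _)
    have hden : id =O[atTop] fun z : ℝ ↦ z - x :=
      (IsEquivalent.refl.sub_isLittleO (isLittleO_const_id_atTop x)).isBigO_symm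
    exact (hnum.trans_isBigO hden).tendsto_div_nhds_zero
  have hslope_le : ∀ᶠ z in atTop, (f y - f x) / (y - x) ≤ (f z - f x) / (z - x) := by
    filter_upwards [eventually_ge_atTop y] with z hyz
    exact hf.secant_mono (mem_univ x) (mem_univ y) (mem_univ z) hxy.ne' (hxy.trans_le hyz).ne' hyz
  have hslope_nonpos : (f y - f x) / (y - x) ≤ 0 := ge_of_tendsto hslope_lim hslope_le
  exact sub_nonpos.mp (by simpa using (div_le_iff₀ (sub_pos.mpr hxy)).mp hslope_nonpos)

theorem eq_of_convexOn_of_isLittleO_cobounded {f : ℝ → ℝ} (hf : ConvexOn ℝ univ f)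
    (hlim : f =o[cobounded ℝ] id) (x y : ℝ) : f x = f y := by
  have hanti : Antitone f := antitone_of_convexOn_of_isLittleO_atTop hf
    (hlim.mono IsOrderBornology.atTop_le_cobounded)
  have hanti_neg : Antitone fun t ↦ f (-t) := by
    refine antitone_of_convexOn_of_isLittleO_atTop
      (by simpa using! hf.comp_linearMap (-LinearMap.id)) ?_
    exact ((hlim.mono IsOrderBornology.atBot_le_cobounded).comp_tendsto
      tendsto_neg_atTop_atBot).neg_right.congr_right fun t ↦ neg_neg t
  have hmono : Monotone f := fun a b hab ↦ by simpa using hanti_neg (neg_le_neg hab)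
  exact (le_total x y).elim (fun h ↦ (hmono h).antisymm (hanti h))
    (fun h ↦ (hanti h).antisymm (hmono h))

theorem isLittleO_norm_rpow_of_norm_le {E F : Type*} [SeminormedAddCommGroup E]
    [SeminormedAddCommGroup F] {f : E → F} {C p : ℝ} (hp : 1 < p)
    (hf : ∀ x, ‖f x‖ ≤ C * (1 + ‖x‖)) :
    f =o[cobounded E] fun x ↦ ‖x‖ ^ p := by
  have hreal : (fun t : ℝ ↦ 1 + t) =o[atTop] fun t ↦ t ^ p := by
    have hbigO : (fun t : ℝ ↦ 1 + t) =O[atTop] id :=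
      (isLittleO_const_id_atTop 1).isBigO.add (isBigO_refl id atTop)
    have hone : (fun _ : ℝ ↦ (1 : ℝ)) =o[atTop] fun t ↦ t ^ (p - 1) :=
      (isLittleO_one_left_iff ℝ).mpr
        (tendsto_norm_atTop_atTop.comp (tendsto_rpow_atTop (sub_pos.mpr hp)))
    refine (hbigO.mul_isLittleO hone).congr' (by simp) ?_
    filter_upwards [eventually_gt_atTop 0] with t ht
    rw [Real.rpow_sub_one ht.ne', id, mul_div_cancel₀ _ ht.ne']
  have hbound : f =O[cobounded E] fun x ↦ 1 + ‖x‖ :=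
    isBigO_of_le' _ fun x ↦ (hf x).trans_eq (by rw [Real.norm_of_nonneg (by positivity)])
  exact hbound.trans_isLittleO (hreal.comp_tendsto tendsto_norm_cobounded_atTop)

theorem stmt_8_general {w : ℝ → ℝ} {κ : ℝ} (hw : ContDiff ℝ 1 w) (hpos : ∀ t, 0 < w t)
    (hκ : κ < 1)
    (hmono : ∀ s t, s < t →
      κ * ∫ r in s..t, deriv w r ^ 2 / w r ≤ deriv w t - deriv w s)
    (hgrowth : w =o[cobounded ℝ] fun t ↦ |t| ^ (1 - κ)⁻¹) (x y : ℝ) : w x = w y := by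
  have hexp : 0 < 1 - κ := sub_pos.mpr hκ
  have hconvex : ConvexOn ℝ univ fun t ↦ w t ^ (1 - κ) :=
    convexOn_rpow_of_integral_le_deriv_sub hw hpos hκ.le hmono
  have hsublinear : (fun t ↦ w t ^ (1 - κ)) =o[cobounded ℝ] id := by
    have hrpow := hgrowth.rpow hexp (.of_forall fun t ↦ Real.rpow_nonneg (abs_nonneg t) _)
    simp only [Real.rpow_inv_rpow (abs_nonneg _) hexp.ne'] at hrpow
    exact hrpow.of_abs_right
  exact (Real.rpow_left_inj (hpos x).le (hpos y).le hexp.ne').mp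
    (eq_of_convexOn_of_isLittleO_cobounded hconvex hsublinear x y)

/-- ODE skeleton of Theorem A3 of the paper: a positive `C¹` function `w` on `ℝ`
satisfying the monotonicity inequality (b1) against every nonnegative `C²` test
function `φ`, together with the linear growth bound `w(t) ≤ C(1+|t|)`, must be
constant. -/
theorem stmt_8 (w : ℝ → ℝ) (hw : ContDiff ℝ 1 w) (hpos : ∀ t : ℝ, 0 < w t)
    (hmono : ∀ φ : ℝ → ℝ, ContDiff ℝ 2 φ → (∀ r : ℝ, 0 ≤ φ r) →
      ∀ s t : ℝ, s < t →
        (φ t * deriv w t - deriv φ t * w t) - (φ s * deriv w s - deriv φ s * w s)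
          ≥ -(∫ r in s..t, deriv (deriv φ) r * w r)
            + (3/4) * ∫ r in s..t, φ r * (deriv w r) ^ 2 / w r)
    (C : ℝ) (hC : 0 < C) (hgrowth : ∀ t : ℝ, w t ≤ C * (1 + |t|)) :
    ∀ x y : ℝ, w x = w y := by
  have hmono_one (s t : ℝ) (hst : s < t) :
      3 / 4 * ∫ r in s..t, deriv w r ^ 2 / w r ≤ deriv w t - deriv w s := by
    simpa using hmono (fun _ ↦ 1) contDiff_const (fun _ ↦ zero_le_one) s t hst
  exact stmt_8_general hw hpos (by norm_num) hmono_one <|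
    isLittleO_norm_rpow_of_norm_le (by norm_num) fun t ↦
      (Real.norm_of_nonneg (hpos t).le).trans_le (hgrowth t)
end
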